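/- Let E be a real Hilbert space, ν, d ∈ ℕ, L ≥ 0, and let f_λ : E → ℝ (λ ∈ Fin d) be differentiable with L-Lipschitz gradients ∇f_λ. Suppose each f_λ has a point x^λ ∈ E with ∇f_λ(x^λ) = 0, and set M := max_λ ‖x* − x^λ‖ for a given x* ∈ E. Let a : Fin ν → ℝ, B : Fin ν → Fin d → ℝ, let Γ ⊆ S be finite subsets of Fin ν, α ≥ 0, D ≥ 0, u : Fin ν → E with ‖u w − x*‖ ≤ D for every w ∈ Γ, and v ∈ E with ‖v − x*‖ ≤ D. Define z w λ := ∇f_λ(u w) if w ∈ Γ and z w λ := 0 if w ∈ S \ Γ. Then ‖α • Σ_{w ∈ S} (a w) • (Σ_λ (B w λ) • (z w λ − ∇f_λ(v)))‖ ≤ α · (2 L D + L M) · Σ_{w ∈ S} |a w| · (Σ_λ |B w λ|). -/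

import Mathlib

/-- Maximum of a real-valued function over `Fin d` (for `0 < d`). -/
noncomputable def finMax {d : ℕ} (hd : 0 < d) (g : Fin d → ℝ) : ℝ :=
  Finset.univ.sup' (Finset.univ_nonempty_iff.mpr (Fin.pos_iff_nonempty.mp hd)) g

/-- Residual bound for the decoded partition gradient covering all scenarios of the SRDO
analysis (including Scenario 2 / Division 2, where the coded gradients of the stragglers in
`S \ Γ` are replaced by zero). -/
theorem srdo_residual_bound_all_scenarios
    {E : Type*} [NormedAddCommGroup E] [InnerProductSpace ℝ E] [CompleteSpace E]
    (ν d : ℕ) (hd : 0 < d) (L : ℝ) (hL : 0 ≤ L)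
    (f : Fin d → E → ℝ) (gf : Fin d → E → E)
    (hf : ∀ lam x, HasGradientAt (f lam) (gf lam x) x)
    (hlip : ∀ lam u w, ‖gf lam u - gf lam w‖ ≤ L * ‖u - w‖)
    (xhat : Fin d → E) (hxhat : ∀ lam, gf lam (xhat lam) = 0)
    (xstar : E)
    (a : Fin ν → ℝ) (B : Fin ν → Fin d → ℝ)
    (Γ S : Finset (Fin ν)) (hΓS : Γ ⊆ S)
    (α D : ℝ) (hα : 0 ≤ α) (hD : 0 ≤ D)
    (u : Fin ν → E) (hu : ∀ w ∈ Γ, ‖u w - xstar‖ ≤ D)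
    (v : E) (hv : ‖v - xstar‖ ≤ D)
    (z : Fin ν → Fin d → E)
    (hzΓ : ∀ w ∈ Γ, ∀ lam, z w lam = gf lam (u w))
    (hzS : ∀ w ∈ S \ Γ, ∀ lam, z w lam = 0) :
    ‖α • ∑ w ∈ S, a w • (∑ lam, B w lam • (z w lam - gf lam v))‖ ≤
      α * (2 * L * D + L * finMax hd fun lam => ‖xstar - xhat lam‖) *
        ∑ w ∈ S, |a w| * (∑ lam, |B w lam|) := by
  have key : ∀ w ∈ S, ∀ lam, ‖z w lam - gf lam v‖ ≤
      2 * L * D + L * finMax hd fun lam => ‖xstar - xhat lam‖ := by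
    intro w hw lam
    have hM : ‖xstar - xhat lam‖ ≤ finMax hd fun lam => ‖xstar - xhat lam‖ :=
      Finset.le_sup' (fun lam => ‖xstar - xhat lam‖) (Finset.mem_univ lam)
    generalize (finMax hd fun lam => ‖xstar - xhat lam‖) = M at hM ⊢
    have hM0 : 0 ≤ M := (norm_nonneg _).trans hM
    have hLM : 0 ≤ L * M := mul_nonneg hL hM0
    have hLD : 0 ≤ L * D := mul_nonneg hL hD
    by_cases h : w ∈ Γ
    · rw [hzΓ w h lam]
      have h1 : ‖u w - v‖ ≤ 2 * D := by
        have h2 := norm_sub_le (u w - xstar) (v - xstar)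
        rw [sub_sub_sub_cancel_right] at h2
        linarith [hu w h]
      have h3 := mul_le_mul_of_nonneg_left h1 hL
      linarith [hlip lam (u w) v]
    · rw [hzS w (Finset.mem_sdiff.mpr ⟨hw, h⟩) lam, ← hxhat lam, norm_sub_rev]
      have h1 : ‖v - xhat lam‖ ≤ D + M := by
        have h2 := norm_add_le (v - xstar) (xstar - xhat lam)
        rw [sub_add_sub_cancel] at h2
        linarith
      have h3 := mul_le_mul_of_nonneg_left h1 hL
      linarith [hlip lam v (xhat lam)]
  generalize (2 * L * D + L * finMax hd fun lam => ‖xstar - xhat lam‖) = C at key ⊢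
  rw [norm_smul, Real.norm_of_nonneg hα, mul_assoc]
  refine mul_le_mul_of_nonneg_left ?_ hα
  rw [Finset.mul_sum]
  refine norm_sum_le_of_le _ fun w hw => ?_
  rw [norm_smul, Real.norm_eq_abs, mul_left_comm]
  refine mul_le_mul_of_nonneg_left ?_ (abs_nonneg _)
  rw [Finset.mul_sum]
  refine norm_sum_le_of_le _ fun lam _ => ?_
  rw [norm_smul, Real.norm_eq_abs, mul_comm C]
  exact mul_le_mul_of_nonneg_left (key w hw lam) (abs_nonneg _)
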